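/- Let n ≥ 2 and let 𝒜 = {[A₁],…,[A_r]} be a malnormal subgroup system of F_n, with L, Γ_i, 𝒞 and F_n − 𝒜 as in the context. Then the projectivized space ℙCurr(F_n,𝒜) = (Curr(F_n,𝒜) − {0})/ℝ₊* is compact; concretely: for every sequence (η_m)_{m ∈ ℕ} of nonzero relative currents on (F_n,𝒜) there exist a subsequence (η_{m_j})_{j ∈ ℕ}, positive real numbers λ_j, and a nonzero relative current η such that for every w ∈ F_n − 𝒜 the sequence (λ_j·η_{m_j}(C(γ_w)))_{j ∈ ℕ} converges to η(C(γ_w)). -/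

import Mathlib

/-!
Compactness rests on the fact that the cylinders of the finitely many words of `𝒞` are compact and
open, and that their translates cover `∂²(F_n,𝒜)`.

* The geodesic joining two limit points of a finitely generated subgroup `B` lies in the minimal
  subtree `T_B` (`one_mem_treeVerts`, `Geo.mem_treeVerts`). Hence the cylinder of a word of
  `F_n - 𝒜` avoids `∂²𝒜`, so it is compact and open in `∂²(F_n,𝒜)` (`cylinder_subset`,
  `isCompact_relCyl`).
* Conversely, every geodesic outside `∂²𝒜` crosses a translate of a word of `𝒞`
  (`exists_dbAct_mem_cylinder`): otherwise each of its segments of length `L + 2` lies in the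
  subtree of a subgroup of the system. Consecutive segments overlap in length `L + 1 > L`, so the
  diameter bound forces these subgroups to be one and the same `B`, and since `T_B` stays within
  bounded distance of `B` (`treeVerts_near`) both ends of the geodesic are in `∂B`. Consequently
  the space is locally compact, and a compact set is covered by finitely many translates of
  cylinders of `𝒞`.
* By invariance the mass of any cylinder of a word of `F_n - 𝒜` is at most that of the cylinder of
  some word of `𝒞` (`measure_relCyl_le`). After dividing each current by its total mass on the
  cylinders of `𝒞`, the sequence is bounded on every compact set. A subsequence converges on all
  cylinders, since a countable power of `[0,∞]` is sequentially compact, and along an ultrafilter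
  the subsequence converges vaguely to a regular measure by the Riesz–Markov–Kakutani theorem
  (`exists_vague_limit`). Indicators of compact open sets are continuous with compact support, so
  the limit has the right values on cylinders; it is invariant (`map_eq_of_vague`), and it is
  nonzero because its total mass on the cylinders of `𝒞` is `1`.
-/

open scoped Classical
open MeasureTheory

noncomputable section

namespace RelCurr

/-- The alphabet `𝔄 = ℬ ∪ ℬ⁻¹`: a letter is a generator together with a sign. -/
abbrev Letter (n : ℕ) := Fin n × Bool

/-- The inverse of a letter. -/
def linv {n : ℕ} (x : Letter n) : Letter n := (x.1, !x.2)

/-- The free group of rank `n` on the basis `Fin n`. -/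
abbrev F (n : ℕ) := FreeGroup (Fin n)

/-- The reduced word of an element of `F n`. -/
def rword {n : ℕ} (g : F n) : List (Letter n) := FreeGroup.toWord g

/-- The length `|g|` of the reduced word of `g`. -/
def wlen {n : ℕ} (g : F n) : ℕ := (rword g).length

/-- The single-letter element of `F n` given by a letter. -/
def letterE {n : ℕ} (b : Letter n) : F n := FreeGroup.mk [b]

/-- The conjugate subgroup `g A g⁻¹`. -/
def conjSub {n : ℕ} (g : F n) (A : Subgroup (F n)) : Subgroup (F n) :=
  Subgroup.map (MulAut.conj g).toMonoidHom A

/-- A subgroup `A` is malnormal if `xAx⁻¹ ∩ A = {1}` for every `x ∉ A`. -/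
def Malnormal {n : ℕ} (A : Subgroup (F n)) : Prop :=
  ∀ x : F n, x ∉ A → conjSub x A ⊓ A = ⊥

/-- The word metric on the Cayley tree `T`. -/
def dist' {n : ℕ} (x y : F n) : ℕ := wlen (x⁻¹ * y)

/-- The cyclically reduced length of `a`. -/
def cycLen {n : ℕ} (a : F n) : ℕ := sInf { m | ∃ h : F n, wlen (h⁻¹ * a * h) = m }

/-- The vertex set of the minimal `A`-invariant subtree `T_A` of the Cayley tree:
the union of the axes of the nontrivial elements of `A`. -/
def treeVerts {n : ℕ} (A : Subgroup (F n)) : Set (F n) :=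
  { h | ∃ a ∈ A, a ≠ 1 ∧ wlen (h⁻¹ * a * h) = cycLen a }

/-- `γ_w ⊆ S`: every prefix of the reduced word of `w` lies in the vertex set `S`. -/
def pathIn {n : ℕ} (w : F n) (S : Set (F n)) : Prop :=
  ∀ m ≤ wlen w, FreeGroup.mk ((rword w).take m) ∈ S

/-- An element is cyclically reduced if the last letter of its reduced word is not the
inverse of the first letter. -/
def CyclicallyReduced {n : ℕ} (w : F n) : Prop :=
  ∀ x y : Letter n, (rword w).head? = some x → (rword w).getLast? = some y → y ≠ linv x

/-- `v` is a length-one extension of `w`. -/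
def LengthOneExt {n : ℕ} (w v : F n) : Prop :=
  ∃ b : Letter n, v = w * letterE b ∧ wlen v = wlen w + 1

/-- `a` is an extension of `w`: the reduced word of `w` is a proper prefix of that of `a`. -/
def ExtensionOf {n : ℕ} (w a : F n) : Prop :=
  rword w <+: rword a ∧ wlen w < wlen a

/-- `g` is a proper power. -/
def IsProperPower {n : ℕ} (g : F n) : Prop := ∃ (h : F n) (k : ℕ), 2 ≤ k ∧ g = h ^ k

section System

variable {n r : ℕ} (A : Fin r → Subgroup (F n))

/-- `[B] ∈ 𝒜`, i.e. `B` is a conjugate of one of the subgroups of the system. -/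
def InSystem (B : Subgroup (F n)) : Prop := ∃ (i : Fin r) (g : F n), B = conjSub g (A i)

/-- The family `A` represents a subgroup system: finite rank subgroups distinct
from `{1}` and `F n`. -/
def IsSystem : Prop := (∀ i, (A i).FG) ∧ (∀ i, A i ≠ ⊥) ∧ (∀ i, A i ≠ ⊤)

/-- The subgroup system is malnormal. -/
def SystemMalnormal : Prop :=
  (∀ i, Malnormal (A i)) ∧
  ∀ B₁ B₂ : Subgroup (F n), InSystem A B₁ → InSystem A B₂ → B₁ ≠ B₂ → B₁ ⊓ B₂ = ⊥

/-- `g` is `𝒜`-peripheral: trivial or contained in a conjugate of one of the `A i`. -/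
def Peripheral (g : F n) : Prop := g = 1 ∨ ∃ B, InSystem A B ∧ g ∈ B

/-- The diameter of the intersection of the trees of two distinct subgroups of the
system is at most `L`. -/
def DiamBound (L : ℕ) : Prop :=
  ∀ B₁ B₂ : Subgroup (F n), InSystem A B₁ → InSystem A B₂ → B₁ ≠ B₂ →
    ∀ x ∈ treeVerts B₁ ∩ treeVerts B₂, ∀ y ∈ treeVerts B₁ ∩ treeVerts B₂, dist' x y ≤ L

/-- `B ∈ Γ_i`: `B` is a conjugate of `A i` whose tree contains the base point `1`. -/
def GammaMem (i : Fin r) (B : Subgroup (F n)) : Prop :=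
  (∃ g : F n, B = conjSub g (A i)) ∧ (1 : F n) ∈ treeVerts B

/-- The finite set `𝒞` of words of length `L+2` whose path is contained in no tree
`T_B` with `B ∈ Γ_i`, for every `i`. -/
def Ccal (L : ℕ) : Set (F n) :=
  { w | wlen w = L + 2 ∧ ∀ (i : Fin r) (B : Subgroup (F n)), GammaMem A i B →
      ¬ pathIn w (treeVerts B) }

/-- `F_n − 𝒜`: the words containing an element of `𝒞` as a contiguous subword. -/
def FmA (L : ℕ) : Set (F n) := { w | ∃ x ∈ Ccal A L, rword x <:+: rword w }

/-- `S_k`: words of length `k` not containing any element of `𝒞` as a subword. -/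
def Sk (L k : ℕ) : Set (F n) := { w | wlen w = k ∧ w ∉ FmA A L }

end System

/-! ### The boundary of `F n` -/

/-- An infinite reduced word. -/
def IsRed {n : ℕ} (ξ : ℕ → Letter n) : Prop := ∀ i, ξ (i + 1) ≠ linv (ξ i)

/-- The Gromov boundary `∂F_n`, realized as the space of infinite reduced words,
topologized as a subspace of the product space. -/
def Boundary (n : ℕ) : Type := { ξ : ℕ → Letter n // IsRed ξ }

instance {n : ℕ} : TopologicalSpace (Boundary n) :=
  instTopologicalSpaceSubtype

/-- The length-`m` prefix of a boundary point. -/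
def bpre {n : ℕ} (ξ : Boundary n) (m : ℕ) : List (Letter n) :=
  (List.range m).map ξ.1

/-- The reduced word of `w` is a prefix of the infinite word `ξ`. -/
def wordPrefixOf {n : ℕ} (w : F n) (ξ : Boundary n) : Prop :=
  bpre ξ (wlen w) = rword w

/-- The boundary (limit set) `∂A ⊆ ∂F_n` of a subgroup `A`. -/
def limitSet {n : ℕ} (A : Subgroup (F n)) : Set (Boundary n) :=
  { ξ | ∀ m : ℕ, ∃ a ∈ A, bpre ξ m <+: rword a }

/-- `ξ = g^{+∞}`: `ξ` is the limit of the reduced words of the powers of `g`. -/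
def IsPosLimit {n : ℕ} (g : F n) (ξ : Boundary n) : Prop :=
  ∀ m : ℕ, ∃ N : ℕ, ∀ k ≥ N, bpre ξ m <+: rword (g ^ k)

/-- The number of letters cancelled when concatenating the word `l` with the
infinite reduced word `ξ`. -/
def cancelLen {n : ℕ} (l : List (Letter n)) (ξ : ℕ → Letter n) : ℕ :=
  sSup { j | j ≤ l.length ∧ ∀ i < j, l.reverse[i]? = some (linv (ξ i)) }

/-- The sequence underlying the action of `g` on a boundary point: left multiplication
followed by cancellation. -/
def actSeq {n : ℕ} (g : F n) (ξ : ℕ → Letter n) : ℕ → Letter n :=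
  fun m =>
    if h : m < (rword g).length - cancelLen (rword g) ξ then
      (rword g).get ⟨m, by omega⟩
    else ξ (m - ((rword g).length - cancelLen (rword g) ξ) + cancelLen (rword g) ξ)

/-- The action of `F n` on its boundary: left multiplication followed by cancellation.
(The sequence `actSeq g ξ.1` is always reduced, so the first branch always applies.) -/
def bAct {n : ℕ} (g : F n) (ξ : Boundary n) : Boundary n :=
  if h : IsRed (actSeq g ξ.1) then ⟨actSeq g ξ.1, h⟩ else ξ

/-! ### The double boundary -/

/-- The diagonal action of `F n` on `Sym2 (∂F_n)`, whose restriction to the set of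
non-diagonal classes is the action on the double boundary `∂²F_n`. -/
def dbAct {n : ℕ} (g : F n) : Sym2 (Boundary n) → Sym2 (Boundary n) := Sym2.map (bAct g)

/-- `∂²𝒜`: the classes `{ξ,η}` with both endpoints in `g·∂A_i = ∂(gA_ig⁻¹)` for some
`i` and `g`. -/
def dblBndA {n r : ℕ} (A : Fin r → Subgroup (F n)) : Set (Sym2 (Boundary n)) :=
  { z | ∃ (i : Fin r) (g : F n) (ξ η : Boundary n), z = s(ξ, η) ∧
      ξ ∈ limitSet (conjSub g (A i)) ∧ η ∈ limitSet (conjSub g (A i)) }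

/-- The double boundary `∂²(F_n,𝒜)` of `F n` relative to `𝒜`, as a subset of
`Sym2 (∂F_n)`: non-diagonal classes not lying in `∂²𝒜`. -/
def relSet {n r : ℕ} (A : Fin r → Subgroup (F n)) : Set (Sym2 (Boundary n)) :=
  { z | ¬ z.IsDiag } \ dblBndA A

/-- The cylinder set `C(γ_w) ⊆ ∂²F_n` of the geodesic path from `1` to `w`. -/
def cylinder {n : ℕ} (w : F n) : Set (Sym2 (Boundary n)) :=
  { z | ∃ ξ η : Boundary n, z = s(ξ, η) ∧ ξ.1 0 ≠ η.1 0 ∧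
      (wordPrefixOf w ξ ∨ wordPrefixOf w η) }

instance {n : ℕ} : MeasurableSpace (Sym2 (Boundary n)) := borel _

/-- The action of `g ∈ F n` on `∂²(F_n,𝒜)`. (The action of `F n` preserves
`∂²(F_n,𝒜)`, so the first branch always applies.) -/
def relAct {n r : ℕ} (A : Fin r → Subgroup (F n)) (g : F n) (z : ↥(relSet A)) :
    ↥(relSet A) :=
  if h : dbAct g z.1 ∈ relSet A then ⟨dbAct g z.1, h⟩ else z

/-- The cylinder `C(γ_w)` as a subset of `∂²(F_n,𝒜)`. -/
def relCyl {n r : ℕ} (A : Fin r → Subgroup (F n)) (w : F n) : Set ↥(relSet A) :=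
  Subtype.val ⁻¹' cylinder w

/-- The translated cylinder `g·C(γ_w)` as a subset of `∂²(F_n,𝒜)`. -/
def relCylG {n r : ℕ} (A : Fin r → Subgroup (F n)) (g w : F n) : Set ↥(relSet A) :=
  Subtype.val ⁻¹' (dbAct g '' cylinder w)

/-- A relative current on `(F_n,𝒜)`: an `F_n`-invariant Radon measure on the
locally compact space `∂²(F_n,𝒜)` (finite on compacts, outer regular, inner regular
on open sets). -/
def IsRelCurrent {n r : ℕ} (A : Fin r → Subgroup (F n)) (μ : Measure ↥(relSet A)) : Prop :=
  (∀ (g : F n) (s : Set ↥(relSet A)), MeasurableSet s → μ (relAct A g ⁻¹' s) = μ s) ∧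
  μ.Regular

/-- The `F_n`-orbit of a point of `Sym2 (∂F_n)`, inside `∂²(F_n,𝒜)`. -/
def orbitOf {n r : ℕ} (A : Fin r → Subgroup (F n)) (z : Sym2 (Boundary n)) :
    Set ↥(relSet A) :=
  { y | ∃ h : F n, (y : Sym2 (Boundary n)) = dbAct h z }

/-! ### Reduced words -/

section Words

variable {n : ℕ}

lemma linv_linv (x : Letter n) : linv (linv x) = x := by simp [linv]

/-- The junction condition of `FreeGroup.IsReduced`, expressed through `linv`. -/
lemma junction_iff (a b : Letter n) : (a.1 = b.1 → a.2 = b.2) ↔ b ≠ linv a := by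
  rcases a with ⟨a, s⟩
  rcases b with ⟨b, t⟩
  cases s <;> cases t <;> simp [linv, eq_comm]

lemma ne_linv_comm {a b : Letter n} : b ≠ linv a ↔ a ≠ linv b := by
  constructor <;> rintro h rfl <;> exact h (linv_linv _).symm

lemma rword_mk {l : List (Letter n)} (h : FreeGroup.IsReduced l) :
    rword (FreeGroup.mk l) = l := by
  rw [rword, FreeGroup.toWord_mk, h.reduce_eq]

lemma mk_rword (g : F n) : FreeGroup.mk (rword g) = g := FreeGroup.mk_toWord

lemma rword_red (g : F n) : FreeGroup.IsReduced (rword g) := FreeGroup.isReduced_toWord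

lemma rword_inj {g h : F n} (e : rword g = rword h) : g = h := FreeGroup.toWord_injective e

lemma wlen_one : wlen (1 : F n) = 0 := FreeGroup.norm_one

lemma wlen_inv (g : F n) : wlen g⁻¹ = wlen g := FreeGroup.norm_inv_eq

lemma wlen_mul_le (g h : F n) : wlen (g * h) ≤ wlen g + wlen h := FreeGroup.norm_mul_le g h

/-- The length-`m` prefix of a sequence of letters. -/
def lp (f : ℕ → Letter n) (m : ℕ) : List (Letter n) := (List.range m).map f

lemma length_lp (f : ℕ → Letter n) (m : ℕ) : (lp f m).length = m := by simp [lp]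

lemma lp_add (f : ℕ → Letter n) (a b : ℕ) : lp f (a + b) = lp f a ++ lp (fun i => f (a + i)) b := by
  simp [lp, List.range_add, Function.comp_def]

lemma lp_succ (f : ℕ → Letter n) (a : ℕ) : lp f (a + 1) = lp f a ++ [f a] := by
  simp [lp, List.range_succ]

lemma lp_red {f : ℕ → Letter n} (hf : IsRed f) (m : ℕ) : FreeGroup.IsReduced (lp f m) := by
  rw [FreeGroup.IsReduced, List.isChain_iff_getElem]
  intro i hi
  rw [junction_iff]
  simpa [lp] using hf i

lemma isRed_of_lp {f : ℕ → Letter n} (h : ∀ m, FreeGroup.IsReduced (lp f m)) : IsRed f := by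
  intro i
  have := h (i + 2)
  rw [FreeGroup.IsReduced, List.isChain_iff_getElem] at this
  have h2 := this i (by simp [lp])
  rw [junction_iff] at h2
  simpa [lp] using h2

/-- The vertex of the Cayley tree at distance `m` from `1` on the ray to `ξ`. -/
def P (ξ : Boundary n) (m : ℕ) : F n := FreeGroup.mk (bpre ξ m)

lemma bpre_eq (ξ : Boundary n) (m : ℕ) : bpre ξ m = lp ξ.1 m := rfl

lemma length_bpre (ξ : Boundary n) (m : ℕ) : (bpre ξ m).length = m := length_lp _ _

lemma rword_P (ξ : Boundary n) (m : ℕ) : rword (P ξ m) = bpre ξ m :=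
  rword_mk (lp_red ξ.2 m)

lemma wlen_P (ξ : Boundary n) (m : ℕ) : wlen (P ξ m) = m := by
  rw [wlen, rword_P, length_bpre]

lemma P_zero (ξ : Boundary n) : P ξ 0 = 1 := rfl

lemma letterE_linv (x : Letter n) : letterE (linv x) = (letterE x)⁻¹ := by
  simp [letterE, linv, FreeGroup.inv_mk, FreeGroup.invRev]

lemma P_succ (ξ : Boundary n) (m : ℕ) : P ξ (m + 1) = P ξ m * letterE (ξ.1 m) := by
  rw [P, bpre_eq, lp_succ, P, letterE, FreeGroup.mul_mk]; rfl

lemma P_inj {ξ η : Boundary n} {a b : ℕ} (h : P ξ a = P η b) :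
    a = b ∧ ∀ i < a, ξ.1 i = η.1 i := by
  have hl : a = b := by rw [← wlen_P ξ a, h, wlen_P]
  subst hl
  refine ⟨rfl, fun i hi => ?_⟩
  have h2 : bpre ξ a = bpre η a := by rw [← rword_P, h, rword_P]
  have := congrArg (fun l => l[i]?) h2
  simpa [bpre, hi] using this

lemma P_congr {ξ η : Boundary n} {a : ℕ} (h : ∀ i < a, ξ.1 i = η.1 i) : P ξ a = P η a := by
  unfold P bpre
  congr 1
  apply List.map_congr_left
  intro i hi
  exact h i (List.mem_range.1 hi)

/-- Multiplication of reduced words: a common piece `c` cancels and the rest is reduced. -/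
lemma exists_cancel_list : ∀ (k : ℕ) (u v : List (Letter n)), v.length ≤ k →
    FreeGroup.IsReduced u → FreeGroup.IsReduced v →
    ∃ p c q, u = p ++ c ∧ v = FreeGroup.invRev c ++ q ∧ FreeGroup.IsReduced (p ++ q) := by
  intro k
  induction k with
  | zero =>
    intro u v hv hu _
    have : v = [] := List.length_eq_zero_iff.1 (by omega)
    subst this
    exact ⟨u, [], [], by simp, by simp, by simpa using hu⟩
  | succ k ih =>
    intro u v hk hu hv
    rcases List.eq_nil_or_concat u with rfl | ⟨u', x, rfl⟩
    · exact ⟨[], [], v, by simp, by simp, by simpa using hv⟩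
    cases v with
    | nil => exact ⟨u'.concat x, [], [], by simp, by simp, by simpa using hu⟩
    | cons y v' =>
      by_cases hxy : y = linv x
      · obtain ⟨p, c, q, h1, h2, h3⟩ := ih u' v' (by simpa using hk)
          (hu.infix ⟨[], [x], by simp⟩) (hv.infix ⟨[y], [], by simp⟩)
        refine ⟨p, c ++ [x], q, by simp [h1], ?_, h3⟩
        rw [FreeGroup.invRev_append, h2, hxy]
        simp [FreeGroup.invRev, linv]
      · refine ⟨u' ++ [x], [], y :: v', by simp, by simp, ?_⟩
        rw [FreeGroup.IsReduced, List.isChain_append]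
        refine ⟨by rw [List.concat_eq_append] at hu; exact hu, hv, ?_⟩
        intro a ha b hb
        rw [junction_iff]
        simp at ha hb
        subst ha; subst hb
        exact hxy

lemma exists_cancel (u v : F n) : ∃ p c q, rword u = p ++ c ∧
    rword v = FreeGroup.invRev c ++ q ∧ rword (u * v) = p ++ q := by
  obtain ⟨p, c, q, h1, h2, h3⟩ :=
    exists_cancel_list _ _ _ le_rfl (rword_red u) (rword_red v)
  refine ⟨p, c, q, h1, h2, ?_⟩
  rw [← rword_mk h3]
  congr 1
  conv_lhs => rw [← mk_rword u, ← mk_rword v, h1, h2]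
  simp only [← FreeGroup.mul_mk, ← FreeGroup.inv_mk]
  group

/-- Right multiplication by `g` destroys at most `wlen g` letters of a reduced word. -/
lemma prefix_mul {u g : F n} {p : List (Letter n)} (h : p <+: rword u)
    (hl : p.length + wlen g ≤ wlen u) : p <+: rword (u * g) := by
  obtain ⟨p', c, q, h1, h2, h3⟩ := exists_cancel u g
  rw [h3]
  have hc : c.length ≤ wlen g := by simp [wlen, h2, FreeGroup.invRev_length]
  have hu : wlen u = p'.length + c.length := by simp [wlen, h1]
  have : p <+: p' := by
    rw [h1] at h
    exact List.prefix_of_prefix_length_le h (List.prefix_append _ _) (by omega)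
  exact this.trans (List.prefix_append _ _)

end Words

/-! ### The action on the boundary -/

section Action

variable {n : ℕ}

/-- `Rel g ξ η`: from some point on, `g` translates the ray to `ξ` onto the ray to `η`.
This says `g·ξ = η`, and is convenient because it is visibly compatible with products. -/
def Rel (g : F n) (ξ η : Boundary n) : Prop :=
  ∃ a b : ℕ, ∀ k, g * P ξ (a + k) = P η (b + k)

lemma Rel.unique {g : F n} {ξ η η' : Boundary n} (h : Rel g ξ η) (h' : Rel g ξ η') : η = η' := by
  obtain ⟨a, b, h⟩ := h
  obtain ⟨a', b', h'⟩ := h'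
  apply Subtype.ext
  funext i
  have e : P η (b + (a' + i + 1)) = P η' (b' + (a + i + 1)) := by
    rw [← h, ← h']; congr 2; omega
  exact (P_inj e).2 i (by omega)

lemma Rel.trans {g h : F n} {ξ η ζ : Boundary n} (h1 : Rel g ξ η) (h2 : Rel h η ζ) :
    Rel (h * g) ξ ζ := by
  obtain ⟨a, b, h1⟩ := h1
  obtain ⟨a', b', h2⟩ := h2
  refine ⟨a + a', b' + b, fun k => ?_⟩
  rw [mul_assoc, add_assoc a, h1, show b + (a' + k) = a' + (b + k) by omega, h2, add_assoc]

lemma Rel.refl (ξ : Boundary n) : Rel 1 ξ ξ := ⟨0, 0, by simp⟩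

/-- The defining formula of `bAct` computes the translated ray, with `c` cancelled letters. -/
lemma bAct_spec (g : F n) (ξ : Boundary n) :
    ∃ c ≤ wlen g, ∀ k, g * P ξ (c + k) = P (bAct g ξ) (wlen g - c + k) := by
  set l := rword g with hl
  set S := { j | j ≤ l.length ∧ ∀ i < j, l.reverse[i]? = some (linv (ξ.1 i)) } with hS
  set c := cancelLen l ξ.1 with hc
  have hbd : BddAbove S := ⟨l.length, fun j hj => hj.1⟩
  have hcS : c ∈ S := Nat.sSup_mem ⟨0, by simp [hS]⟩ hbd
  have hmax : c + 1 ∉ S := fun h => by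
    have := le_csSup hbd h
    change c + 1 ≤ c at this
    omega
  set p := l.take (l.length - c) with hp
  have hsplit : l = p ++ FreeGroup.invRev (bpre ξ c) := by
    have h1 : l.reverse.take c = (bpre ξ c).map linv := by
      apply List.ext_getElem?
      intro i
      by_cases hi : i < c
      · rw [List.getElem?_take_of_lt hi, hcS.2 i hi]
        simp [bpre, hi]
      · rw [List.getElem?_eq_none (by simp; omega), List.getElem?_eq_none (by simp [bpre]; omega)]
    have h2 : l.drop (l.length - c) = FreeGroup.invRev (bpre ξ c) := by
      rw [List.take_reverse] at h1
      rw [FreeGroup.invRev, ← List.reverse_reverse (List.drop _ _), h1]; rfl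
    rw [← h2, List.take_append_drop]
  have hplen : p.length = l.length - c := by simp [hp]
  have hg : g = FreeGroup.mk p * (P ξ c)⁻¹ := by
    rw [← mk_rword g, ← hl, hsplit, ← FreeGroup.mul_mk, P, FreeGroup.inv_mk]
  have hlp : ∀ k, lp (actSeq g ξ.1) (l.length - c + k) = p ++ lp (fun i => ξ.1 (c + i)) k := by
    intro k
    apply List.ext_getElem
    · simp [length_lp, hplen]
    intro i h1 h2
    have hi : i < l.length - c + k := by simpa [length_lp] using h1
    by_cases hip : i < l.length - c
    · rw [List.getElem_append_left (by omega)]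
      have : actSeq g ξ.1 i = l[i] := by
        unfold actSeq
        rw [dif_pos hip]
        rfl
      simp [lp, this, hp]
    · rw [List.getElem_append_right (by omega)]
      have : actSeq g ξ.1 i = ξ.1 (i - (l.length - c) + c) := by
        unfold actSeq
        rw [dif_neg hip]
      simp only [lp, List.getElem_map, List.getElem_range, this, hplen]
      rw [add_comm]
  have hred : ∀ k, FreeGroup.IsReduced (p ++ lp (fun i => ξ.1 (c + i)) k) := by
    intro k
    rw [FreeGroup.IsReduced, List.isChain_append]
    refine ⟨(rword_red g).infix (List.take_prefix _ _).isInfix, lp_red (fun i => ξ.2 (c + i)) k, ?_⟩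
    intro x hx y hy
    rw [junction_iff]
    rintro hyx
    apply hmax
    have hy' : y = ξ.1 c := by
      cases k with
      | zero => simp [lp] at hy
      | succ k => simpa [lp, List.head?_range] using hy.symm
    have hpos : 0 < p.length := by
      rw [List.length_pos_iff]; rintro h0; simp [h0] at hx
    refine ⟨by omega, fun i hi => ?_⟩
    rcases Nat.lt_succ_iff_lt_or_eq.1 hi with hi | rfl
    · exact hcS.2 i hi
    · rw [← hy', hyx, linv_linv, hsplit]
      rw [List.reverse_append, List.getElem?_append_right (by simp [length_bpre])]
      simp only [List.length_reverse, FreeGroup.invRev_length, length_bpre, Nat.sub_self]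
      rw [← List.head?_eq_getElem?, List.head?_reverse]
      exact hx
  have hact : IsRed (actSeq g ξ.1) := by
    apply isRed_of_lp
    intro m
    have h1 := hred m
    rw [← hlp, add_comm, lp_add] at h1
    exact h1.infix (List.prefix_append _ _).isInfix
  refine ⟨c, hcS.1, fun k => ?_⟩
  have hb : bAct g ξ = ⟨actSeq g ξ.1, hact⟩ := dif_pos hact
  rw [hb]
  change g * FreeGroup.mk (lp ξ.1 (c + k)) = FreeGroup.mk (lp (actSeq g ξ.1) (l.length - c + k))
  rw [hlp, lp_add]
  conv_lhs => rw [hg]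
  rw [P, bpre_eq, ← FreeGroup.mul_mk, ← FreeGroup.mul_mk]
  group

lemma rel_bAct (g : F n) (ξ : Boundary n) : Rel g ξ (bAct g ξ) := by
  obtain ⟨c, _, h⟩ := bAct_spec g ξ
  exact ⟨c, _, h⟩

lemma bAct_eq {g : F n} {ξ η : Boundary n} (h : Rel g ξ η) : bAct g ξ = η :=
  (rel_bAct g ξ).unique h

lemma bAct_one (ξ : Boundary n) : bAct 1 ξ = ξ := bAct_eq (Rel.refl ξ)

lemma bAct_mul (g h : F n) (ξ : Boundary n) : bAct (g * h) ξ = bAct g (bAct h ξ) :=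
  bAct_eq ((rel_bAct h ξ).trans (rel_bAct g _))

lemma continuous_bAct (g : F n) : Continuous (bAct g) := by
  refine Continuous.subtype_mk (f := fun ξ => (bAct g ξ).1) ?_ _
  refine continuous_pi fun m => ?_
  rw [continuous_discrete_rng]
  intro x
  rw [isOpen_iff_mem_nhds]
  intro ξ hξ
  set M := m + 1 + 2 * wlen g with hM
  have hopen : IsOpen { ξ' : Boundary n | ∀ i ∈ Finset.range M, ξ'.1 i = ξ.1 i } := by
    have : { ξ' : Boundary n | ∀ i ∈ Finset.range M, ξ'.1 i = ξ.1 i } =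
        ⋂ i ∈ Finset.range M, (fun ξ' : Boundary n => ξ'.1 i) ⁻¹' {ξ.1 i} := by
      ext; simp
    rw [this]
    refine isOpen_biInter_finset fun i _ => ?_
    exact (isOpen_discrete _).preimage ((continuous_apply i).comp continuous_subtype_val)
  refine Filter.mem_of_superset (hopen.mem_nhds (by simp)) ?_
  intro ξ' h'
  have hP : P ξ' M = P ξ M := P_congr fun i hi => h' i (Finset.mem_range.2 hi)
  obtain ⟨c, hc, e⟩ := bAct_spec g ξ
  obtain ⟨c', hc', e'⟩ := bAct_spec g ξ'
  have h1 := e (M - c)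
  have h2 := e' (M - c')
  rw [show c + (M - c) = M by omega] at h1
  rw [show c' + (M - c') = M by omega, hP, h1] at h2
  have := (P_inj h2).2 m (by omega)
  change (bAct g ξ').1 m = x
  rw [← this]; exact hξ

end Action

/-! ### Minimal subtrees and limit sets -/

section Trees

variable {n : ℕ}

lemma mem_conjSub {g x : F n} {B : Subgroup (F n)} : x ∈ conjSub g B ↔ g⁻¹ * x * g ∈ B := by
  constructor
  · rintro ⟨b, hb, rfl⟩
    simpa [mul_assoc] using hb
  · intro h
    exact ⟨_, h, by simp [mul_assoc]⟩

lemma conjSub_conjSub (g h : F n) (B : Subgroup (F n)) :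
    conjSub g (conjSub h B) = conjSub (g * h) B := by
  ext x; simp [mem_conjSub, mul_assoc]

lemma conjSub_one (B : Subgroup (F n)) : conjSub 1 B = B := by
  ext x; simp [mem_conjSub]

lemma conjSub_fg {B : Subgroup (F n)} (h : B.FG) (g : F n) : (conjSub g B).FG := by
  obtain ⟨S, rfl⟩ := h
  exact ⟨S.image (MulAut.conj g), by rw [conjSub, MonoidHom.map_closure]; simp⟩

lemma cycLen_conj (g a : F n) : cycLen (g * a * g⁻¹) = cycLen a := by
  unfold cycLen
  congr 1
  ext m
  constructor
  · rintro ⟨h, rfl⟩; exact ⟨g⁻¹ * h, by congr 1; group⟩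
  · rintro ⟨h, rfl⟩; exact ⟨g * h, by congr 1; group⟩

lemma mem_treeVerts_conj {B : Subgroup (F n)} {h : F n} (hh : h ∈ treeVerts B) (g : F n) :
    g * h ∈ treeVerts (conjSub g B) := by
  obtain ⟨a, ha, h1, h2⟩ := hh
  refine ⟨g * a * g⁻¹, mem_conjSub.2 (by simpa [mul_assoc] using ha), by simpa using h1, ?_⟩
  rw [cycLen_conj, ← h2]
  congr 1
  group

lemma rword_pow {a : F n} (h : FreeGroup.IsCyclicallyReduced (rword a)) (N : ℕ) :
    rword (a ^ N) = (List.replicate N (rword a)).flatten := by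
  rw [rword, FreeGroup.toWord_pow]
  exact (h.flatten_replicate N).isReduced.reduce_eq

lemma wlen_pow {a : F n} (h : FreeGroup.IsCyclicallyReduced (rword a)) (N : ℕ) :
    wlen (a ^ N) = N * wlen a := by
  rw [wlen, rword_pow h]; simp [wlen]

/-- A cyclically reduced element is shortest in its conjugacy class: otherwise the lengths of
its powers, which grow at rate `wlen a`, would violate the triangle inequality. -/
lemma wlen_eq_cycLen {a : F n} (h : FreeGroup.IsCyclicallyReduced (rword a)) :
    wlen a = cycLen a := by
  apply le_antisymm
  · have hne : { m | ∃ h : F n, wlen (h⁻¹ * a * h) = m }.Nonempty := ⟨_, 1, rfl⟩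
    obtain ⟨g, hg⟩ := Nat.sInf_mem hne
    change _ = cycLen a at hg
    rw [← hg]
    by_contra hlt
    push Not at hlt
    set N := 2 * wlen g + 1
    have e : a ^ N = g * (g⁻¹ * a * g) ^ N * g⁻¹ := by
      have : g⁻¹ * a * g = g⁻¹ * a * (g⁻¹)⁻¹ := by simp
      rw [this, conj_pow]; group
    have hp : ∀ (x : F n) (k : ℕ), wlen (x ^ k) ≤ k * wlen x := by
      intro x k
      induction k with
      | zero => simp [wlen_one]
      | succ k ih =>
        rw [pow_succ, Nat.succ_mul]
        exact (wlen_mul_le _ _).trans (by omega)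
    have h1 := wlen_pow h N
    have h2 := wlen_mul_le (g * (g⁻¹ * a * g) ^ N) g⁻¹
    have h3 := wlen_mul_le g ((g⁻¹ * a * g) ^ N)
    have h4 := hp (g⁻¹ * a * g) N
    rw [← e, h1, wlen_inv] at h2
    have h5 : N * (wlen (g⁻¹ * a * g) + 1) ≤ N * wlen a := Nat.mul_le_mul_left _ hlt
    rw [Nat.mul_add] at h5
    omega
  · exact Nat.sInf_le ⟨1, by simp⟩

lemma last_of_not_cyc {a : F n} {x : Letter n} (h0 : x ∈ (rword a).head?)
    (h : ¬ FreeGroup.IsCyclicallyReduced (rword a)) : linv x ∈ (rword a).getLast? := by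
  by_contra hcon
  apply h
  refine ⟨rword_red a, fun y hy b hb => ?_⟩
  rw [junction_iff, ne_linv_comm]
  have : x = b := by
    rw [Option.mem_def] at h0 hb
    rw [h0] at hb
    exact Option.some_injective _ hb
  subst this
  rintro rfl
  exact hcon hy

lemma cyc_of_wlen_eq {a h : F n} (e : wlen (h⁻¹ * a * h) = cycLen a) :
    FreeGroup.IsCyclicallyReduced (rword (h⁻¹ * a * h)) := by
  by_contra hc
  set c := h⁻¹ * a * h with hcdef
  rcases hw : rword c with _ | ⟨x, t⟩
  · rw [hw] at hc; exact hc FreeGroup.IsCyclicallyReduced.nil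
  have hl := last_of_not_cyc (x := x) (by rw [hw]; simp) hc
  rcases List.eq_nil_or_concat t with rfl | ⟨t', y, rfl⟩
  · rw [hw] at hc; exact hc FreeGroup.IsCyclicallyReduced.singleton
  have hy : y = linv x := by
    rw [hw] at hl
    rw [List.concat_eq_append, ← List.cons_append, List.getLast?_append] at hl
    simpa using hl
  subst hy
  have e2 : (h * letterE x)⁻¹ * a * (h * letterE x) = FreeGroup.mk t' := by
    have : c = letterE x * FreeGroup.mk t' * (letterE x)⁻¹ := by
      rw [← mk_rword c, hw, ← letterE_linv, letterE, letterE, FreeGroup.mul_mk, FreeGroup.mul_mk]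
      simp
    have h3 : (h * letterE x)⁻¹ * a * (h * letterE x) = (letterE x)⁻¹ * c * letterE x := by
      rw [hcdef]; group
    rw [h3, this]; group
  have h1 : cycLen a ≤ wlen (FreeGroup.mk t' : F n) := Nat.sInf_le ⟨h * letterE x, by rw [e2]⟩
  have h2 : wlen (FreeGroup.mk t' : F n) ≤ t'.length := FreeGroup.norm_mk_le
  have h3 : wlen c = t'.length + 2 := by rw [wlen, hw]; simp
  omega

/-- A finitely generated subgroup is quasiconvex: geodesics from `1` to its elements stay
within bounded distance of it. -/
lemma prefix_near {B : Subgroup (F n)} (hB : B.FG) :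
    ∃ D : ℕ, ∀ b ∈ B, ∀ p, p <+: rword b → ∃ b' ∈ B, wlen (b'⁻¹ * FreeGroup.mk p) ≤ D := by
  obtain ⟨S, rfl⟩ := hB
  set D := S.sup wlen
  refine ⟨D, ?_⟩
  have key : ∀ b s : F n, s ∈ Subgroup.closure (S : Set (F n)) → wlen s ≤ D →
      b ∈ Subgroup.closure (S : Set (F n)) →
      (∀ p, p <+: rword b → ∃ b' ∈ Subgroup.closure (S : Set (F n)),
        wlen (b'⁻¹ * FreeGroup.mk p) ≤ D) →
      ∀ p, p <+: rword (b * s) → ∃ b' ∈ Subgroup.closure (S : Set (F n)),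
        wlen (b'⁻¹ * FreeGroup.mk p) ≤ D := by
    intro b s hs hsD hb ih p hp
    obtain ⟨u, c, q, h1, h2, h3⟩ := exists_cancel b s
    rcases le_total p.length u.length with hle | hle
    · apply ih
      rw [h3] at hp
      rw [h1]
      exact (List.prefix_of_prefix_length_le hp (List.prefix_append _ _) hle).trans
        (List.prefix_append _ _)
    · refine ⟨b * s, mul_mem hb hs, ?_⟩
      obtain ⟨t, ht⟩ := hp
      have e : b * s = FreeGroup.mk p * FreeGroup.mk t := by
        rw [← mk_rword (b * s), ← ht, FreeGroup.mul_mk]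
      have e2 : (b * s)⁻¹ * FreeGroup.mk p = (FreeGroup.mk t)⁻¹ := by rw [e]; group
      rw [e2, wlen_inv]
      have h4 : wlen (FreeGroup.mk t : F n) ≤ t.length := FreeGroup.norm_mk_le
      have h5 : p.length + t.length = u.length + q.length := by
        rw [← List.length_append, ht, h3, List.length_append]
      have h6 : q.length ≤ wlen s := by simp [wlen, h2]
      omega
  intro b hb
  induction hb using Subgroup.closure_induction_right with
  | one =>
    intro p hp
    refine ⟨1, one_mem _, ?_⟩
    have : p = [] := by simpa [rword] using hp
    subst this
    simp [wlen, rword, ← FreeGroup.one_eq_mk]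
  | mul_right b hb s hs ih =>
    exact key b s (Subgroup.subset_closure hs) (Finset.le_sup hs) hb ih
  | mul_inv_cancel b hb s hs ih =>
    refine key b s⁻¹ (inv_mem (Subgroup.subset_closure hs)) ?_ hb ih
    rw [wlen_inv]; exact Finset.le_sup hs

/-- A finitely generated subgroup acts cocompactly on its minimal subtree. A vertex `h` on the
axis of `a` has a translate `a ^ N * h` on the geodesic from `1` to `a ^ (2 * N)`. -/
lemma treeVerts_near {B : Subgroup (F n)} (hB : B.FG) :
    ∃ D : ℕ, ∀ h ∈ treeVerts B, ∃ b ∈ B, wlen (b⁻¹ * h) ≤ D := by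
  obtain ⟨D, hD⟩ := prefix_near hB
  refine ⟨D, ?_⟩
  rintro h ⟨a, ha, ha1, e⟩
  have hc := cyc_of_wlen_eq e
  set c := h⁻¹ * a * h with hcdef
  have hc1 : 1 ≤ wlen c := by
    rw [Nat.one_le_iff_ne_zero]
    intro h0
    have : c = 1 := FreeGroup.norm_eq_zero.1 h0
    apply ha1
    have h2 : a = h * c * h⁻¹ := by rw [hcdef]; group
    rw [h2, this]; group
  set N := wlen h + 1 with hN
  have hapow : ∀ k, a ^ k = h * c ^ k * h⁻¹ := by
    intro k
    have : a = h * c * h⁻¹ := by rw [hcdef]; group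
    rw [this, conj_pow]
  set W := rword (c ^ N) with hW
  have hWlen : W.length = N * wlen c := wlen_pow hc N
  have hWge : N ≤ W.length := by rw [hWlen]; exact Nat.le_mul_of_pos_right _ hc1
  have h2N : rword (c ^ (N + N)) = W ++ W := by
    rw [hW, rword_pow hc, rword_pow hc, List.replicate_add, List.flatten_append]
  obtain ⟨p, d, q, h1, h2, h3⟩ := exists_cancel h (c ^ N)
  have hdl : d.length ≤ wlen h := by simp [wlen, h1]
  have hql : W.length = d.length + q.length := by
    rw [hW, h2]; simp [FreeGroup.invRev_length]
  have hq : q ≠ [] := by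
    rintro rfl; simp at hql; omega
  have hred : FreeGroup.IsReduced (p ++ q ++ W) := by
    refine FreeGroup.IsReduced.append_overlap (h3 ▸ rword_red _) ?_ hq
    refine (rword_red (c ^ (N + N))).infix ⟨FreeGroup.invRev d, [], ?_⟩
    rw [h2N]; nth_rw 2 [hW]; rw [h2]; simp
  have hmul : rword (h * c ^ (N + N)) = p ++ q ++ W := by
    rw [← rword_mk hred, ← FreeGroup.mul_mk, ← h3, mk_rword, hW, mk_rword, pow_add, mul_assoc]
  have hpre : p ++ q <+: rword (a ^ (N + N)) := by
    rw [hapow]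
    apply prefix_mul
    · rw [hmul]; exact List.prefix_append _ _
    · have : wlen (h * c ^ (N + N)) = (p ++ q).length + W.length := by
        rw [wlen, hmul, List.length_append]
      rw [this, wlen_inv]; omega
  obtain ⟨b, hb, hbD⟩ := hD _ (pow_mem ha _) _ hpre
  refine ⟨(a ^ N)⁻¹ * b, mul_mem (inv_mem (pow_mem ha _)) hb, ?_⟩
  have e1 : ((a ^ N)⁻¹ * b)⁻¹ * h = b⁻¹ * FreeGroup.mk (p ++ q) := by
    rw [← h3, mk_rword]
    have : h * c ^ N = a ^ N * h := by rw [hapow]; group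
    rw [this]; group
  rw [e1]; exact hbD

/-- `ξ` is a conical limit point of `B`: its ray stays within bounded distance of `B`. -/
def Conical (B : Subgroup (F n)) (ξ : Boundary n) : Prop :=
  ∃ D : ℕ, ∀ m, ∃ b ∈ B, wlen (b⁻¹ * P ξ m) ≤ D

lemma conical_of_mem {B : Subgroup (F n)} (hB : B.FG) {ξ : Boundary n} (h : ξ ∈ limitSet B) :
    Conical B ξ := by
  obtain ⟨D, hD⟩ := prefix_near hB
  refine ⟨D, fun m => ?_⟩
  obtain ⟨a, ha, hp⟩ := h m
  exact hD a ha _ hp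

lemma mem_of_conical {B : Subgroup (F n)} {ξ : Boundary n} (h : Conical B ξ) :
    ξ ∈ limitSet B := by
  obtain ⟨D, hD⟩ := h
  intro m
  obtain ⟨b, hb, hl⟩ := hD (m + D)
  refine ⟨b, hb, ?_⟩
  have e : b = P ξ (m + D) * (b⁻¹ * P ξ (m + D))⁻¹ := by group
  rw [e]
  apply prefix_mul
  · rw [rword_P, bpre_eq, bpre_eq, lp_add]; exact List.prefix_append _ _
  · rw [wlen_inv, wlen_P, length_bpre]; omega

lemma bAct_mem_limitSet {B : Subgroup (F n)} (hB : B.FG) {ξ : Boundary n} (h : ξ ∈ limitSet B)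
    (g : F n) : bAct g ξ ∈ limitSet (conjSub g B) := by
  apply mem_of_conical
  obtain ⟨D, hD⟩ := conical_of_mem hB h
  obtain ⟨a, b, hr⟩ := rel_bAct g ξ
  refine ⟨D + wlen g + b, fun m => ?_⟩
  rcases le_total b m with hm | hm
  · obtain ⟨x, hx, hl⟩ := hD (a + (m - b))
    refine ⟨g * x * g⁻¹, mem_conjSub.2 (by simpa [mul_assoc] using hx), ?_⟩
    have := hr (m - b)
    rw [show b + (m - b) = m by omega] at this
    have e : (g * x * g⁻¹)⁻¹ * P (bAct g ξ) m = g * (x⁻¹ * P ξ (a + (m - b))) := by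
      rw [← this]; group
    rw [e]
    exact (wlen_mul_le _ _).trans (by omega)
  · exact ⟨1, one_mem _, by simp [wlen_P]; omega⟩

/-- If two limit points of `B` start with different letters, then `1` lies on the axis of an
element of `B`: of elements `a`, `b` starting with these letters, one of `a`, `b`, `a * b` is
cyclically reduced. -/
lemma one_mem_treeVerts {B : Subgroup (F n)} {ξ η : Boundary n} (hξ : ξ ∈ limitSet B)
    (hη : η ∈ limitSet B) (hne : ξ.1 0 ≠ η.1 0) : (1 : F n) ∈ treeVerts B := by
  have main : ∀ a ∈ B, ∀ x, x ∈ (rword a).head? → FreeGroup.IsCyclicallyReduced (rword a) →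
      (1 : F n) ∈ treeVerts B := by
    intro a ha x hx hc
    refine ⟨a, ha, ?_, by simpa using wlen_eq_cycLen hc⟩
    rintro rfl
    simp [rword] at hx
  obtain ⟨a, ha, hpa⟩ := hξ 1
  obtain ⟨b, hb, hpb⟩ := hη 1
  have ha0 : ξ.1 0 ∈ (rword a).head? := by
    obtain ⟨t, ht⟩ := hpa
    rw [← ht]; simp [bpre]
  have hb0 : η.1 0 ∈ (rword b).head? := by
    obtain ⟨t, ht⟩ := hpb
    rw [← ht]; simp [bpre]
  by_cases hca : FreeGroup.IsCyclicallyReduced (rword a)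
  · exact main a ha _ ha0 hca
  by_cases hcb : FreeGroup.IsCyclicallyReduced (rword b)
  · exact main b hb _ hb0 hcb
  have hal := last_of_not_cyc ha0 hca
  have hbl := last_of_not_cyc hb0 hcb
  have hred : FreeGroup.IsReduced (rword a ++ rword b) := by
    rw [FreeGroup.IsReduced, List.isChain_append]
    refine ⟨rword_red a, rword_red b, fun x hx y hy => ?_⟩
    rw [junction_iff, Option.mem_unique hx hal, Option.mem_unique hy hb0, linv_linv]
    exact hne.symm
  have hab : rword (a * b) = rword a ++ rword b := by
    rw [← rword_mk hred, ← FreeGroup.mul_mk, mk_rword, mk_rword]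
  have hh : ξ.1 0 ∈ (rword (a * b)).head? := by
    rw [hab, List.head?_append, Option.mem_def, Option.mem_def.1 ha0]; rfl
  have hl : linv (η.1 0) ∈ (rword (a * b)).getLast? := by
    rw [hab, List.getLast?_append, Option.mem_def, Option.mem_def.1 hbl]; rfl
  refine main (a * b) (mul_mem ha hb) _ hh ⟨rword_red _, fun x hx y hy => ?_⟩
  rw [junction_iff, Option.mem_unique hx hl, Option.mem_unique hy hh, linv_linv]
  exact hne

end Trees

/-! ### Bi-infinite geodesics through the base point -/

section Geodesics

variable {n : ℕ}

/-- A bi-infinite geodesic of the Cayley tree: `v k` are its vertices, with `v 0 = 1`, and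
`e k` is the label of the edge from `v k` to `v (k + 1)`. -/
structure Geo (e : ℤ → Letter n) (v : ℤ → F n) : Prop where
  red : ∀ k, e (k + 1) ≠ linv (e k)
  zero : v 0 = 1
  step : ∀ k, v (k + 1) = v k * letterE (e k)

variable {e : ℤ → Letter n} {v : ℤ → F n}

/-- The same geodesic with the opposite orientation. -/
lemma Geo.rev (h : Geo e v) : Geo (fun k => linv (e (-1 - k))) (fun k => v (-k)) where
  red k := by
    have := h.red (-1 - (k + 1))
    rw [show -1 - (k + 1) + 1 = -1 - k by ring] at this
    rw [linv_linv]
    intro h2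
    exact this h2.symm
  zero := by simpa using h.zero
  step k := by
    have := h.step (-1 - k)
    rw [show -1 - k + 1 = -k by ring] at this
    rw [this, letterE_linv, show -(k + 1) = -1 - k by ring]
    group

/-- The forward end of the geodesic, seen from its vertex `v k`. -/
def Geo.fwd (h : Geo e v) (k : ℤ) : Boundary n :=
  ⟨fun i => e (k + i), fun i => by
    have := h.red (k + i)
    rw [add_assoc] at this
    exact_mod_cast this⟩

lemma Geo.P_fwd (h : Geo e v) (k : ℤ) (i : ℕ) : v k * P (h.fwd k) i = v (k + i) := by
  induction i with
  | zero => simp [P_zero]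
  | succ i ih =>
    rw [P_succ, ← mul_assoc, ih, Nat.cast_succ, ← add_assoc, h.step]
    rfl

lemma Geo.bAct_fwd (h : Geo e v) (k : ℤ) : bAct (v k)⁻¹ (h.fwd 0) = h.fwd k := by
  apply bAct_eq
  refine ⟨k.toNat, (-k).toNat, fun i => ?_⟩
  have h0 := h.P_fwd 0 (k.toNat + i)
  rw [h.zero, one_mul] at h0
  have h1 := h.P_fwd k ((-k).toNat + i)
  rw [h0, ← mul_right_inj (v k), h1, mul_inv_cancel_left]
  congr 1
  push_cast
  omega

lemma Geo.bAct_bwd (h : Geo e v) (k : ℤ) :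
    bAct (v k)⁻¹ (h.rev.fwd 0) = h.rev.fwd (-k) := by
  have := h.rev.bAct_fwd (-k)
  simpa using this

lemma Geo.fwd_ne (h : Geo e v) (k : ℤ) : (h.fwd k).1 0 ≠ (h.rev.fwd (-k)).1 0 := by
  have := h.red (k - 1)
  rw [sub_add_cancel] at this
  simp only [Geo.fwd, Nat.cast_zero, add_zero]
  rwa [show -1 - -k = k - 1 by ring]

lemma exists_geo {ξ η : Boundary n} (hne : ξ.1 0 ≠ η.1 0) :
    ∃ (e : ℤ → Letter n) (v : ℤ → F n) (h : Geo e v), h.fwd 0 = ξ ∧ h.rev.fwd 0 = η := by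
  let e : ℤ → Letter n := fun k => if 0 ≤ k then ξ.1 k.toNat else linv (η.1 (-k - 1).toNat)
  let v : ℤ → F n := fun k => if 0 ≤ k then P ξ k.toNat else P η (-k).toNat
  have hg : Geo e v := by
    refine ⟨fun k => ?_, by simp [v, P_zero], fun k => ?_⟩
    · rcases lt_trichotomy k (-1) with hk | rfl | hk
      · simp only [e, if_neg (show ¬ 0 ≤ k by omega), if_neg (show ¬ 0 ≤ k + 1 by omega), linv_linv]
        have := η.2 (-(k + 1) - 1).toNat
        rw [show (-(k + 1) - 1).toNat + 1 = (-k - 1).toNat by omega] at this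
        exact this.symm
      · simpa [e, linv_linv] using hne
      · simp only [e, if_pos (show 0 ≤ k by omega), if_pos (show 0 ≤ k + 1 by omega)]
        rw [show (k + 1).toNat = k.toNat + 1 by omega]
        exact ξ.2 _
    · rcases lt_trichotomy k (-1) with hk | rfl | hk
      · simp only [e, v, if_neg (show ¬ 0 ≤ k by omega), if_neg (show ¬ 0 ≤ k + 1 by omega)]
        rw [show (-k).toNat = (-(k + 1)).toNat + 1 by omega, P_succ, letterE_linv,
          show (-k - 1).toNat = (-(k + 1)).toNat by omega]
        group
      · simp only [e, v]
        have := P_succ η 0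
        simp [P_zero] at this
        simp [P_zero, letterE_linv, this]
      · simp only [e, v, if_pos (show 0 ≤ k by omega), if_pos (show 0 ≤ k + 1 by omega)]
        rw [show (k + 1).toNat = k.toNat + 1 by omega, P_succ]
  refine ⟨e, v, hg, ?_, ?_⟩
  · apply Subtype.ext
    funext i
    simp [Geo.fwd, e]
  · apply Subtype.ext
    funext i
    simp only [Geo.fwd, e]
    rw [if_neg (by omega), linv_linv]
    exact congrArg η.1 (by omega)

end Geodesics

/-! ### Cylinders in the relative double boundary -/

section Cylinders

variable {n r : ℕ} {A : Fin r → Subgroup (F n)} {L : ℕ}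

lemma dbAct_one (z : Sym2 (Boundary n)) : dbAct 1 z = z := by
  induction z using Sym2.ind with
  | _ x y => simp [dbAct, bAct_one]

lemma dbAct_mul (g h : F n) (z : Sym2 (Boundary n)) : dbAct (g * h) z = dbAct g (dbAct h z) := by
  induction z using Sym2.ind with
  | _ x y => simp [dbAct, bAct_mul]

lemma bAct_injective (g : F n) : Function.Injective (bAct g) := by
  intro x y h
  have := congrArg (bAct g⁻¹) h
  simpa [← bAct_mul, bAct_one] using this

lemma dbAct_mem_dblBndA (hfg : ∀ i, (A i).FG) {z : Sym2 (Boundary n)} (h : z ∈ dblBndA A)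
    (g : F n) : dbAct g z ∈ dblBndA A := by
  obtain ⟨i, k, ξ, η, rfl, h1, h2⟩ := h
  refine ⟨i, g * k, bAct g ξ, bAct g η, rfl, ?_, ?_⟩
  · rw [← conjSub_conjSub]; exact bAct_mem_limitSet (conjSub_fg (hfg i) k) h1 g
  · rw [← conjSub_conjSub]; exact bAct_mem_limitSet (conjSub_fg (hfg i) k) h2 g

lemma dbAct_mem_relSet (hfg : ∀ i, (A i).FG) {z : Sym2 (Boundary n)} (h : z ∈ relSet A)
    (g : F n) : dbAct g z ∈ relSet A := by
  refine ⟨?_, fun h2 => h.2 ?_⟩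
  · have h1 := h.1
    induction z using Sym2.ind with
    | _ x y =>
      simp only [Set.mem_ofPred_eq, dbAct, Sym2.map_mk, Sym2.mk_isDiag_iff] at h1 ⊢
      exact fun h => h1 (bAct_injective g h)
  · have := dbAct_mem_dblBndA hfg h2 g⁻¹
    rwa [← dbAct_mul, inv_mul_cancel, dbAct_one] at this

lemma mem_cylinder {w : F n} {z : Sym2 (Boundary n)} (h : z ∈ cylinder w) :
    ∃ ξ η : Boundary n, z = s(ξ, η) ∧ ξ.1 0 ≠ η.1 0 ∧ bpre ξ (wlen w) = rword w := by
  obtain ⟨ξ, η, rfl, hne, h | h⟩ := h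
  · exact ⟨ξ, η, rfl, hne, h⟩
  · exact ⟨η, ξ, Sym2.eq_swap, hne.symm, h⟩

lemma take_bpre (ξ : Boundary n) {m k : ℕ} (h : m ≤ k) : (bpre ξ k).take m = bpre ξ m := by
  rw [bpre, ← List.map_take, List.take_range, min_eq_left h, bpre]

/-- A geodesic joining two limit points of a finitely generated `B` lies in the tree of `B`. -/
lemma Geo.mem_treeVerts {e : ℤ → Letter n} {v : ℤ → F n} (h : Geo e v) {B : Subgroup (F n)}
    (hB : B.FG) (h1 : h.fwd 0 ∈ limitSet B) (h2 : h.rev.fwd 0 ∈ limitSet B) (k : ℤ) :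
    v k ∈ treeVerts B := by
  have e1 := bAct_mem_limitSet hB h1 (v k)⁻¹
  have e2 := bAct_mem_limitSet hB h2 (v k)⁻¹
  rw [h.bAct_fwd] at e1
  rw [h.bAct_bwd] at e2
  have := mem_treeVerts_conj (one_mem_treeVerts e1 e2 (h.fwd_ne k)) (v k)
  rwa [conjSub_conjSub, mul_inv_cancel, conjSub_one, mul_one] at this

lemma cylinder_subset_of_mem_Ccal (hfg : ∀ i, (A i).FG) {x : F n} (hx : x ∈ Ccal A L) :
    cylinder x ⊆ relSet A := by
  intro z hz
  obtain ⟨ξ, η, rfl, hne, hp⟩ := mem_cylinder hz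
  refine ⟨?_, ?_⟩
  · simp only [Set.mem_ofPred_eq, Sym2.mk_isDiag_iff]
    rintro rfl
    exact hne rfl
  · rintro ⟨i, g, ξ', η', heq, h1, h2⟩
    set B := conjSub g (A i) with hB
    have hBfg : B.FG := conjSub_fg (hfg i) g
    have h12 : ξ ∈ limitSet B ∧ η ∈ limitSet B := by
      rcases Sym2.eq_iff.1 heq with ⟨rfl, rfl⟩ | ⟨rfl, rfl⟩
      · exact ⟨h1, h2⟩
      · exact ⟨h2, h1⟩
    obtain ⟨e, v, hgeo, hf, hb⟩ := exists_geo hne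
    have hv : ∀ m : ℕ, P ξ m ∈ treeVerts B := by
      intro m
      have h3 := hgeo.mem_treeVerts hBfg (hf ▸ h12.1) (hb ▸ h12.2) m
      have h4 := hgeo.P_fwd 0 m
      rw [hgeo.zero, one_mul, zero_add, hf] at h4
      rwa [h4]
    refine hx.2 i B ⟨⟨g, rfl⟩, ?_⟩ ?_
    · simpa [P_zero] using hv 0
    · intro m hm
      rw [← hp, take_bpre _ hm]
      exact hv m

/-- A path containing a word of `𝒞` translates its cylinder into the cylinder of that word. -/
lemma exists_translate {w : F n} (hw : w ∈ FmA A L) :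
    ∃ x ∈ Ccal A L, ∃ g : F n, ∀ z ∈ cylinder w, dbAct g z ∈ cylinder x := by
  obtain ⟨x, hx, s, t, hst⟩ := hw
  refine ⟨x, hx, (FreeGroup.mk s)⁻¹, fun z hz => ?_⟩
  obtain ⟨ξ, η, rfl, hne, hp⟩ := mem_cylinder hz
  obtain ⟨e, v, hgeo, hf, hb⟩ := exists_geo hne
  have hlen : wlen w = s.length + wlen x + t.length := by
    rw [wlen, ← hst]; simp [wlen, add_assoc]
  rw [← hst, hlen, bpre_eq, add_assoc, lp_add, lp_add, List.append_assoc] at hp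
  obtain ⟨hp1, hp2⟩ := List.append_inj hp (length_lp _ _)
  obtain ⟨hp2, -⟩ := List.append_inj hp2 (length_lp _ _)
  have hv : v s.length = FreeGroup.mk s := by
    have h4 := hgeo.P_fwd 0 s.length
    rw [hgeo.zero, one_mul, zero_add, hf] at h4
    rw [← h4, P, bpre_eq, hp1]
  rw [← hv]
  refine ⟨hgeo.fwd s.length, hgeo.rev.fwd (-s.length), ?_, hgeo.fwd_ne _, Or.inl ?_⟩
  · rw [← hgeo.bAct_fwd, ← hgeo.bAct_bwd, hf, hb]; rfl
  · rw [wordPrefixOf, bpre_eq, ← hp2]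
    congr 1
    funext i
    rw [← hf]
    simp [Geo.fwd]

lemma cylinder_subset (hfg : ∀ i, (A i).FG) {w : F n} (hw : w ∈ FmA A L) :
    cylinder w ⊆ relSet A := by
  intro z hz
  obtain ⟨x, hx, g, h⟩ := exists_translate hw
  have := dbAct_mem_relSet hfg (cylinder_subset_of_mem_Ccal hfg hx (h z hz)) g⁻¹
  rwa [← dbAct_mul, inv_mul_cancel, dbAct_one] at this

/-- Every geodesic outside `∂²𝒜` crosses a translate of a word of `𝒞`. Otherwise each of its
segments of length `L + 2` lies in the tree of a subgroup of the system; two consecutive segments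
overlap in length `L + 1`, so the subgroup is always the same `B`, and the whole geodesic lies in
the tree of `B`, whence its ends lie in `∂B`. -/
lemma exists_dbAct_mem_cylinder (hfg : ∀ i, (A i).FG) (hdiam : DiamBound A L)
    {z : Sym2 (Boundary n)} (hz : z ∈ relSet A) :
    ∃ x ∈ Ccal A L, ∃ g : F n, dbAct g z ∈ cylinder x := by
  -- Reduction to a geodesic passing through the base point.
  suffices H : ∀ ξ η : Boundary n, ξ.1 0 ≠ η.1 0 → s(ξ, η) ∈ relSet A →
      ∃ x ∈ Ccal A L, ∃ g : F n, dbAct g s(ξ, η) ∈ cylinder x by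
    induction z using Sym2.ind with
    | _ ξ η =>
    have hne : ξ ≠ η := by simpa using hz.1
    have hex : ∃ k, ξ.1 k ≠ η.1 k := by
      by_contra h
      push Not at h
      exact hne (Subtype.ext (funext h))
    set k := Nat.find hex with hk
    have hlt : ∀ i < k, ξ.1 i = η.1 i := fun i hi => not_not.1 (Nat.find_min hex hi)
    have shift : ∀ ζ : Boundary n, bAct (P ζ k)⁻¹ ζ =
        ⟨fun i => ζ.1 (k + i), fun i => ζ.2 (k + i)⟩ := by
      intro ζ
      apply bAct_eq
      refine ⟨k, 0, fun i => ?_⟩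
      change (FreeGroup.mk (lp ζ.1 k))⁻¹ * FreeGroup.mk (lp ζ.1 (k + i)) =
        FreeGroup.mk (lp (fun i => ζ.1 (k + i)) (0 + i))
      rw [lp_add, ← FreeGroup.mul_mk, inv_mul_cancel_left, zero_add]
    have hP : P ξ k = P η k := P_congr hlt
    have hrel := dbAct_mem_relSet hfg hz (P ξ k)⁻¹
    have e : dbAct (P ξ k)⁻¹ s(ξ, η) = s(bAct (P ξ k)⁻¹ ξ, bAct (P η k)⁻¹ η) := by
      rw [← hP]; rfl
    obtain ⟨x, hx, g, hg⟩ := H _ _ (by rw [shift, shift]; exact Nat.find_spec hex) (e ▸ hrel)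
    refine ⟨x, hx, g * (P ξ k)⁻¹, ?_⟩
    rwa [dbAct_mul, e]
  intro ξ η hne hz
  obtain ⟨e, v, hgeo, hf, hb⟩ := exists_geo hne
  by_contra hcon
  push Not at hcon
  have hstep : ∀ k : ℤ, ∃ B, InSystem A B ∧ ∀ m : ℕ, m ≤ L + 2 → v (k + m) ∈ treeVerts B := by
    intro k
    set x := P (hgeo.fwd k) (L + 2) with hx
    have hxw : rword x = bpre (hgeo.fwd k) (L + 2) := rword_P _ _
    have hxl : wlen x = L + 2 := wlen_P _ _
    have hxC : x ∉ Ccal A L := by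
      intro hxC
      refine hcon x hxC (v k)⁻¹ ⟨hgeo.fwd k, hgeo.rev.fwd (-k), ?_, hgeo.fwd_ne k, Or.inl ?_⟩
      · rw [← hgeo.bAct_fwd, ← hgeo.bAct_bwd, hf, hb]; rfl
      · rw [wordPrefixOf, hxl, hxw]
    have : ∃ i B, GammaMem A i B ∧ pathIn x (treeVerts B) := by
      by_contra h
      push Not at h
      exact hxC ⟨hxl, h⟩
    obtain ⟨i, B, ⟨⟨g, rfl⟩, -⟩, hpath⟩ := this
    refine ⟨conjSub (v k) (conjSub g (A i)), ⟨i, v k * g, conjSub_conjSub _ _ _⟩, fun m hm => ?_⟩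
    have h1 := hpath m (by omega)
    rw [hxw, take_bpre _ hm] at h1
    have h2 := mem_treeVerts_conj h1 (v k)
    change v k * P (hgeo.fwd k) m ∈ _ at h2
    rwa [hgeo.P_fwd] at h2
  choose B hBsys hB using hstep
  have hconst : ∀ k, B (k + 1) = B k := by
    intro k
    by_contra hne'
    have h1 : v (k + 1) ∈ treeVerts (B (k + 1)) ∩ treeVerts (B k) :=
      ⟨by simpa using hB (k + 1) 0 (by omega), by simpa using hB k 1 (by omega)⟩
    have h2 : v (k + 1 + (L + 1 : ℕ)) ∈ treeVerts (B (k + 1)) ∩ treeVerts (B k) := by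
      refine ⟨hB (k + 1) (L + 1) (by omega), ?_⟩
      have := hB k (L + 2) le_rfl
      rwa [show k + 1 + ((L + 1 : ℕ) : ℤ) = k + ((L + 2 : ℕ) : ℤ) by push_cast; ring]
    have h3 := hdiam _ _ (hBsys _) (hBsys _) hne' _ h1 _ h2
    rw [dist', ← hgeo.P_fwd, inv_mul_cancel_left, wlen_P] at h3
    omega
  have hB0 : ∀ k, B k = B 0 := by
    intro k
    induction k using Int.induction_on with
    | zero => rfl
    | succ i ih => rw [hconst, ih]
    | pred i ih =>
      rw [← hconst, sub_add_cancel, ih]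
  obtain ⟨i, g, hBi⟩ := hBsys 0
  have hfgB : (B 0).FG := hBi ▸ conjSub_fg (hfg i) g
  obtain ⟨D, hD⟩ := treeVerts_near hfgB
  have hall : ∀ k, v k ∈ treeVerts (B 0) := by
    intro k
    have := hB k 0 (by omega)
    rw [hB0] at this
    simpa using this
  apply hz.2
  refine ⟨i, g, ξ, η, rfl, ?_, ?_⟩
  · rw [← hBi]
    refine mem_of_conical ⟨D, fun m => ?_⟩
    have h4 := hgeo.P_fwd 0 m
    rw [hgeo.zero, one_mul, hf] at h4
    rw [h4]
    exact hD _ (hall _)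
  · rw [← hBi]
    refine mem_of_conical ⟨D, fun m => ?_⟩
    have h4 := hgeo.rev.P_fwd 0 m
    rw [hgeo.rev.zero, one_mul, hb] at h4
    rw [h4]
    exact hD _ (hall _)

end Cylinders

/-! ### Topology of the relative double boundary -/

section Topology

variable {n r : ℕ} {A : Fin r → Subgroup (F n)} {L : ℕ}

instance : T2Space (Boundary n) :=
  inferInstanceAs (T2Space { ξ : ℕ → Letter n // IsRed ξ })

lemma continuous_coord (i : ℕ) : Continuous fun ξ : Boundary n => ξ.1 i :=
  (continuous_apply i).comp continuous_subtype_val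

instance : CompactSpace (Boundary n) := by
  suffices h : IsCompact { ξ : ℕ → Letter n | IsRed ξ } from isCompact_iff_compactSpace.1 h
  apply IsClosed.isCompact
  have : { ξ : ℕ → Letter n | IsRed ξ } = ⋂ i, { ξ | ξ (i + 1) ≠ linv (ξ i) } := by
    ext; simp [IsRed]
  rw [this]
  refine isClosed_iInter fun i => ?_
  have hc : Continuous fun ξ : ℕ → Letter n => (ξ (i + 1), ξ i) := by fun_prop
  exact (isClosed_discrete { p : Letter n × Letter n | p.1 ≠ linv p.2 }).preimage hc

/-- The projection of ordered pairs onto unordered pairs. -/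
def symMk (p : Boundary n × Boundary n) : Sym2 (Boundary n) := s(p.1, p.2)

lemma isOpenQuotientMap_symMk : IsOpenQuotientMap (symMk (n := n)) where
  surjective z := by
    induction z using Sym2.ind with
    | _ x y => exact ⟨(x, y), rfl⟩
  continuous := continuous_quot_mk
  isOpenMap U hU := by
    have : symMk ⁻¹' (symMk '' U) = U ∪ Prod.swap ⁻¹' U := by
      ext ⟨x, y⟩
      simp only [symMk, Set.mem_preimage, Set.mem_image, Set.mem_union, Prod.exists, Sym2.eq_iff,
        Prod.swap_prod_mk]
      constructor
      · rintro ⟨a, b, h, ⟨rfl, rfl⟩ | ⟨rfl, rfl⟩⟩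
        · exact Or.inl h
        · exact Or.inr h
      · rintro (h | h)
        · exact ⟨x, y, h, Or.inl ⟨rfl, rfl⟩⟩
        · exact ⟨y, x, h, Or.inr ⟨rfl, rfl⟩⟩
    have hq : Topology.IsQuotientMap (symMk (n := n)) := isQuotientMap_quot_mk
    rw [← hq.isOpen_preimage, this]
    exact hU.union (hU.preimage continuous_swap)

instance : T2Space (Sym2 (Boundary n)) := by
  rw [t2Space_iff_of_isOpenQuotientMap isOpenQuotientMap_symMk]
  have : {q : (Boundary n × Boundary n) × (Boundary n × Boundary n) | symMk q.1 = symMk q.2} =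
      {q | q.1 = q.2} ∪ {q | q.1 = q.2.swap} := by
    ext ⟨⟨a, b⟩, ⟨c, d⟩⟩
    simp [symMk]
  rw [this]
  exact (isClosed_eq continuous_fst continuous_snd).union
    (isClosed_eq continuous_fst (continuous_swap.comp continuous_snd))

instance : BorelSpace (Sym2 (Boundary n)) := ⟨rfl⟩

lemma continuous_dbAct (g : F n) : Continuous (dbAct g) := by
  rw [isOpenQuotientMap_symMk.isQuotientMap.continuous_iff]
  have : dbAct g ∘ symMk = symMk ∘ Prod.map (bAct g) (bAct g) := by
    funext ⟨x, y⟩; rfl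
  rw [this]
  exact isOpenQuotientMap_symMk.continuous.comp
    ((continuous_bAct g).prodMap (continuous_bAct g))

/-- Ordered pairs of ends whose geodesic crosses the path from `1` to `w` in this direction. -/
def orderedCyl (w : F n) : Set (Boundary n × Boundary n) :=
  { p | p.1.1 0 ≠ p.2.1 0 } ∩ { p | bpre p.1 (wlen w) = rword w }

lemma isClopen_orderedCyl (w : F n) : IsClopen (orderedCyl w) := by
  have h1 : IsClopen { p : Boundary n × Boundary n | p.1.1 0 ≠ p.2.1 0 } := by
    have hc : Continuous fun p : Boundary n × Boundary n => (p.1.1 0, p.2.1 0) :=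
      ((continuous_coord 0).comp continuous_fst).prodMk
        ((continuous_coord 0).comp continuous_snd)
    exact (isClopen_discrete { q : Letter n × Letter n | q.1 ≠ q.2 }).preimage hc
  have h2 : IsClopen { p : Boundary n × Boundary n | bpre p.1 (wlen w) = rword w } := by
    have : { p : Boundary n × Boundary n | bpre p.1 (wlen w) = rword w } =
        ⋂ i ∈ Finset.range (wlen w), (fun p : Boundary n × Boundary n => p.1.1 i) ⁻¹'
          {x | (rword w)[i]? = some x} := by
      ext p
      simp only [Set.mem_ofPred_eq, Set.mem_iInter, Set.mem_preimage, Finset.mem_range]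
      constructor
      · intro h i hi
        rw [← h]; simp [bpre, hi]
      · intro h
        apply List.ext_getElem?
        intro i
        by_cases hi : i < wlen w
        · rw [h i hi]; simp [bpre, hi]
        · rw [List.getElem?_eq_none (by simp [bpre]; omega),
            List.getElem?_eq_none (by change wlen w ≤ i; omega)]
    rw [this]
    exact isClopen_biInter_finset fun i _ =>
      (isClopen_discrete _).preimage ((continuous_coord i).comp continuous_fst)
  exact h1.inter h2

lemma cylinder_eq (w : F n) : cylinder w = symMk '' orderedCyl w := by
  ext z
  constructor
  · intro h
    obtain ⟨ξ, η, rfl, hne, hp⟩ := mem_cylinder h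
    exact ⟨(ξ, η), ⟨hne, hp⟩, rfl⟩
  · rintro ⟨⟨ξ, η⟩, ⟨hne, hp⟩, rfl⟩
    exact ⟨ξ, η, rfl, hne, Or.inl hp⟩

lemma isOpen_relCyl (w : F n) : IsOpen (relCyl A w) := by
  refine IsOpen.preimage continuous_subtype_val ?_
  rw [cylinder_eq]
  exact isOpenQuotientMap_symMk.isOpenMap _ (isClopen_orderedCyl w).isOpen

lemma isCompact_relCyl (hfg : ∀ i, (A i).FG) {w : F n} (hw : w ∈ FmA A L) :
    IsCompact (relCyl A w) := by
  rw [relCyl, Topology.IsInducing.subtypeVal.isCompact_preimage_iff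
    (by rw [Subtype.range_val]; exact cylinder_subset hfg hw), cylinder_eq]
  exact (isClopen_orderedCyl w).isClosed.isCompact.image isOpenQuotientMap_symMk.continuous

lemma relAct_val (hfg : ∀ i, (A i).FG) (g : F n) (z : ↥(relSet A)) :
    (relAct A g z).1 = dbAct g z.1 := by
  rw [relAct, dif_pos (dbAct_mem_relSet hfg z.2 g)]

lemma continuous_relAct (hfg : ∀ i, (A i).FG) (g : F n) : Continuous (relAct A g) := by
  rw [continuous_induced_rng]
  have : Subtype.val ∘ relAct A g = dbAct g ∘ Subtype.val := funext fun z => relAct_val hfg g z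
  rw [this]
  exact (continuous_dbAct g).comp continuous_subtype_val

/-- The action of `g` on the relative double boundary, as a homeomorphism. -/
def relHomeo (hfg : ∀ i, (A i).FG) (g : F n) : ↥(relSet A) ≃ₜ ↥(relSet A) where
  toFun := relAct A g
  invFun := relAct A g⁻¹
  left_inv z := Subtype.ext (by
    rw [relAct_val hfg, relAct_val hfg, ← dbAct_mul, inv_mul_cancel, dbAct_one])
  right_inv z := Subtype.ext (by
    rw [relAct_val hfg, relAct_val hfg, ← dbAct_mul, mul_inv_cancel, dbAct_one])
  continuous_toFun := continuous_relAct hfg g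
  continuous_invFun := continuous_relAct hfg g⁻¹

lemma Ccal_subset_FmA {x : F n} (hx : x ∈ Ccal A L) : x ∈ FmA A L := ⟨x, hx, List.infix_rfl⟩

lemma finite_Ccal : (Ccal A L).Finite := by
  have h : { l : List (Letter n) | l.length = L + 2 }.Finite := List.finite_length_eq _ _
  refine Set.Finite.of_finite_image (f := rword) (h.subset ?_) (fun a _ b _ e => rword_inj e)
  rintro _ ⟨x, hx, rfl⟩
  exact hx.1

lemma exists_relAct_mem (hfg : ∀ i, (A i).FG) (hdiam : DiamBound A L) (z : ↥(relSet A)) :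
    ∃ x ∈ Ccal A L, ∃ g : F n, z ∈ relAct A g ⁻¹' relCyl A x := by
  obtain ⟨x, hx, g, h⟩ := exists_dbAct_mem_cylinder hfg hdiam z.2
  refine ⟨x, hx, g, ?_⟩
  change (relAct A g z).1 ∈ cylinder x
  rwa [relAct_val hfg]

lemma locallyCompact_relSet (hfg : ∀ i, (A i).FG) (hdiam : DiamBound A L) :
    LocallyCompactSpace ↥(relSet A) := by
  have : WeaklyLocallyCompactSpace ↥(relSet A) := by
    refine ⟨fun z => ?_⟩
    obtain ⟨x, hx, g, h⟩ := exists_relAct_mem hfg hdiam z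
    refine ⟨relAct A g ⁻¹' relCyl A x, ?_, ?_⟩
    · exact (relHomeo hfg g).isCompact_preimage.2 (isCompact_relCyl hfg (Ccal_subset_FmA hx))
    · exact ((isOpen_relCyl x).preimage (continuous_relAct hfg g)).mem_nhds h
  infer_instance

end Topology

/-! ### Vague limits of measures -/

section Vague

variable {X : Type*} [TopologicalSpace X] [T2Space X] [MeasurableSpace X] [BorelSpace X]

open scoped CompactlySupported

/-- A sequence of measures that is uniformly bounded on every compact set converges vaguely along
an ultrafilter: the limits of the integrals define a positive functional, which the
Riesz–Markov–Kakutani theorem represents by a regular measure. -/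
lemma exists_vague_limit [LocallyCompactSpace X] (U : Ultrafilter ℕ) (ν : ℕ → Measure X)
    [∀ j, IsFiniteMeasureOnCompacts (ν j)]
    (hb : ∀ K : Set X, IsCompact K → ∃ C : NNReal, ∀ j, ν j K ≤ C) :
    ∃ η : Measure X, η.Regular ∧ ∀ f : C_c(X, ℝ),
      Filter.Tendsto (fun j => ∫ x, f x ∂ν j) U (nhds (∫ x, f x ∂η)) := by
  have h_integrable : ∀ (f : C_c(X, ℝ)) j, Integrable f (ν j) := fun f j =>
    f.continuous.integrable_of_hasCompactSupport f.hasCompactSupport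
  have hlim : ∀ f : C_c(X, ℝ), ∃ l : ℝ, Filter.Tendsto (fun j => ∫ x, f x ∂ν j) U (nhds l) := by
    intro f
    obtain ⟨C, hC⟩ := hb _ f.hasCompactSupport
    obtain ⟨M, hM⟩ := f.hasCompactSupport.exists_bound_of_continuous f.continuous
    have hbound : ∀ j, (∫ x, f x ∂ν j) ∈ Metric.closedBall (0 : ℝ) (max M 0 * C) := by
      intro j
      rw [mem_closedBall_zero_iff]
      have hsupp : ∫ x, f x ∂ν j = ∫ x in tsupport f, f x ∂ν j :=
        (setIntegral_eq_integral_of_forall_compl_eq_zero fun x hx =>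
          image_eq_zero_of_notMem_tsupport hx).symm
      rw [hsupp]
      have hlt : ν j (tsupport f) < ⊤ := (hC j).trans_lt ENNReal.coe_lt_top
      refine (norm_setIntegral_le_of_norm_le_const hlt fun x _ =>
        (hM x).trans (le_max_left M 0)).trans ?_
      have hreal : (ν j).real (tsupport f) ≤ C := ENNReal.toReal_le_coe_of_le_coe (hC j)
      exact mul_le_mul_of_nonneg_left hreal (le_max_right _ _)
    obtain ⟨l, -, hl⟩ := (isCompact_closedBall (0 : ℝ) (max M 0 * C)).ultrafilter_le_nhds
      (U.map fun j => ∫ x, f x ∂ν j) (by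
        rw [Filter.le_principal_iff]
        exact Filter.mem_map.2 (Filter.univ_mem' hbound))
    exact ⟨l, hl⟩
  choose Λ hΛ using hlim
  let Λl : C_c(X, ℝ) →ₗ[ℝ] ℝ :=
    { toFun := Λ
      map_add' := fun f g => by
        refine tendsto_nhds_unique (hΛ (f + g)) (((hΛ f).add (hΛ g)).congr fun j => ?_)
        rw [← integral_add (h_integrable f j) (h_integrable g j)]; rfl
      map_smul' := fun c f => by
        refine tendsto_nhds_unique (hΛ (c • f)) (((hΛ f).const_mul c).congr fun j => ?_)
        rw [← integral_const_mul]; rfl }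
  let Λp : C_c(X, ℝ) →ₚ[ℝ] ℝ := PositiveLinearMap.mk₀ Λl fun f hf =>
    ge_of_tendsto' (hΛ f) fun j => integral_nonneg fun x => hf x
  refine ⟨RealRMK.rieszMeasure Λp, inferInstance, fun f => ?_⟩
  rw [RealRMK.integral_rieszMeasure]
  exact hΛ f

/-- The indicator function of a compact open set. -/
def indic {C : Set X} (ho : IsOpen C) (hc : IsCompact C) : C_c(X, ℝ) where
  toFun := C.indicator 1
  continuous_toFun := IsClopen.continuous_indicator ⟨hc.isClosed, ho⟩ continuous_one
  hasCompactSupport' := HasCompactSupport.intro hc fun _ hx => Set.indicator_of_notMem hx _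

lemma integral_indic {C : Set X} (ho : IsOpen C) (hc : IsCompact C) (μ : Measure X) :
    ∫ x, indic ho hc x ∂μ = μ.real C := integral_indicator_one ho.measurableSet

/-- A vague limit of measures invariant under a homeomorphism is invariant. -/
lemma map_eq_of_vague [LocallyCompactSpace X] {U : Ultrafilter ℕ} {ν : ℕ → Measure X}
    {η : Measure X} [η.Regular]
    (h : ∀ f : C_c(X, ℝ), Filter.Tendsto (fun j => ∫ x, f x ∂ν j) U (nhds (∫ x, f x ∂η)))
    (φ : X ≃ₜ X) (hφ : ∀ j, (ν j).map φ = ν j) : η.map φ = η := by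
  have : (η.map φ).Regular := Measure.Regular.map φ
  refine Measure.ext_of_integral_eq_on_compactlySupported fun f => ?_
  let g : C_c(X, ℝ) :=
    ⟨⟨f ∘ φ, f.continuous.comp φ.continuous⟩,
      f.hasCompactSupport.comp_homeomorph φ⟩
  have e : ∀ μ : Measure X, ∫ x, f x ∂(μ.map φ) = ∫ x, g x ∂μ := fun μ =>
    integral_map_equiv φ.toMeasurableEquiv f
  rw [e]
  refine tendsto_nhds_unique (h g) ((h f).congr fun j => ?_)
  rw [← e, hφ]

end Vague

/-! ### Compactness -/

section Compactness

variable {n r : ℕ} {A : Fin r → Subgroup (F n)} {L : ℕ}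

lemma measure_relCyl_le {μ : Measure ↥(relSet A)} (hμ : IsRelCurrent A μ)
    (hfg : ∀ i, (A i).FG) {w : F n} (hw : w ∈ FmA A L) :
    ∃ x ∈ Ccal A L, μ (relCyl A w) ≤ μ (relCyl A x) := by
  obtain ⟨x, hx, g, h⟩ := exists_translate hw
  refine ⟨x, hx, ?_⟩
  rw [← hμ.1 g _ (isOpen_relCyl x).measurableSet]
  refine measure_mono fun z hz => ?_
  change (relAct A g z).1 ∈ cylinder x
  rw [relAct_val hfg]
  exact h _ hz

end Compactness

/-- Compactness of the space of projectivized relative currents. -/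
theorem statement_10 (n r L : ℕ) (hn : 2 ≤ n) (A : Fin r → Subgroup (F n))
    (hsys : IsSystem A) (hmal : SystemMalnormal A) (hL : 1 ≤ L)
    (hdiam : DiamBound A L) (hbase : ∀ i, (1 : F n) ∈ treeVerts (A i))
    (ηs : ℕ → Measure ↥(relSet A))
    (hcur : ∀ m, IsRelCurrent A (ηs m))
    (hnz : ∀ m, ∃ w ∈ FmA A L, ηs m (relCyl A w) ≠ 0) :
    ∃ (ms : ℕ → ℕ) (lam : ℕ → NNReal) (η : Measure ↥(relSet A)),
      StrictMono ms ∧ (∀ j, 0 < lam j) ∧ IsRelCurrent A η ∧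
      (∃ w ∈ FmA A L, η (relCyl A w) ≠ 0) ∧
      ∀ w ∈ FmA A L,
        Filter.Tendsto (fun j => (lam j : ENNReal) * ηs (ms j) (relCyl A w))
          Filter.atTop (nhds (η (relCyl A w))) := by
  have hfg := hsys.1
  have : LocallyCompactSpace ↥(relSet A) := locallyCompact_relSet hfg hdiam
  have hreg : ∀ m, (ηs m).Regular := fun m => (hcur m).2
  -- Each current is normalized so that its values on the cylinders of `𝒞` sum to `1`.
  set 𝒞 := (finite_Ccal (A := A) (L := L)).toFinset with h𝒞
  have mem𝒞 : ∀ {x}, x ∈ 𝒞 ↔ x ∈ Ccal A L := by simp [h𝒞]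
  set S : ℕ → ENNReal := fun m => ∑ x ∈ 𝒞, ηs m (relCyl A x) with hS
  have hStop : ∀ m, S m ≠ ⊤ := fun m => ENNReal.sum_ne_top.2 fun x hx =>
    (isCompact_relCyl hfg (Ccal_subset_FmA (mem𝒞.1 hx))).measure_ne_top
  have hleS : ∀ m, ∀ w ∈ FmA A L, ηs m (relCyl A w) ≤ S m := by
    intro m w hw
    obtain ⟨x, hx, hle⟩ := measure_relCyl_le (hcur m) hfg hw
    exact hle.trans (Finset.single_le_sum (f := fun x => ηs m (relCyl A x))
      (fun _ _ => zero_le) (mem𝒞.2 hx))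
  have hS0 : ∀ m, S m ≠ 0 := by
    intro m h0
    obtain ⟨w, hw, hne⟩ := hnz m
    exact hne (le_antisymm (h0 ▸ hleS m w hw) zero_le)
  set lam0 : ℕ → NNReal := fun m => ((S m).toNNReal)⁻¹ with hlam0
  have hlam0_pos : ∀ m, 0 < lam0 m := fun m =>
    inv_pos.2 (ENNReal.toNNReal_pos (hS0 m) (hStop m))
  have hlam0_coe : ∀ m, (lam0 m : ENNReal) = (S m)⁻¹ := by
    intro m
    rw [hlam0, ENNReal.coe_inv (ENNReal.toNNReal_pos (hS0 m) (hStop m)).ne',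
      ENNReal.coe_toNNReal (hStop m)]
  -- A subsequence along which the normalized values converge on all cylinders at once.
  obtain ⟨ℓ, ms, hms, hℓ⟩ := CompactSpace.tendsto_subseq
    (fun (m : ℕ) (w : F n) => (lam0 m : ENNReal) * ηs m (relCyl A w))
  rw [tendsto_pi_nhds] at hℓ
  set ν : ℕ → Measure ↥(relSet A) := fun j => lam0 (ms j) • ηs (ms j) with hν
  have hν_apply : ∀ j s, ν j s = (lam0 (ms j) : ENNReal) * ηs (ms j) s := fun j s => rfl
  have hν_inv : ∀ j g s, MeasurableSet s → ν j (relAct A g ⁻¹' s) = ν j s := by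
    intro j g s hs
    rw [hν_apply, hν_apply, (hcur _).1 g s hs]
  have hν_le : ∀ j, ∀ w ∈ FmA A L, ν j (relCyl A w) ≤ 1 := by
    intro j w hw
    rw [hν_apply, hlam0_coe, ← ENNReal.inv_mul_cancel (hS0 (ms j)) (hStop (ms j))]
    exact mul_le_mul_right (hleS _ w hw) _
  have hν_fin : ∀ j, IsFiniteMeasureOnCompacts (ν j) := by
    refine fun j => ⟨fun K hK => ?_⟩
    rw [hν_apply]
    exact ENNReal.mul_lt_top ENNReal.coe_lt_top hK.measure_lt_top
  -- A compact set is covered by finitely many translates of cylinders of `𝒞`.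
  have hbd : ∀ K : Set ↥(relSet A), IsCompact K → ∃ C : NNReal, ∀ j, ν j K ≤ C := by
    intro K hK
    obtain ⟨t, ht⟩ := hK.elim_finite_subcover
      (fun p : F n × Ccal A L => relAct A p.1 ⁻¹' relCyl A p.2.1)
      (fun p => (isOpen_relCyl _).preimage (continuous_relAct hfg p.1))
      (fun z _ => by
        obtain ⟨x, hx, g, h⟩ := exists_relAct_mem hfg hdiam z
        exact Set.mem_iUnion.2 ⟨(g, ⟨x, hx⟩), h⟩)
    refine ⟨t.card, fun j => ?_⟩
    calc ν j K ≤ ν j (⋃ p ∈ t, relAct A p.1 ⁻¹' relCyl A p.2.1) := measure_mono ht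
      _ ≤ ∑ p ∈ t, ν j (relAct A p.1 ⁻¹' relCyl A p.2.1) := measure_biUnion_finset_le _ _
      _ ≤ ∑ p ∈ t, 1 := by
        refine Finset.sum_le_sum fun p _ => ?_
        rw [hν_inv _ _ _ (isOpen_relCyl _).measurableSet]
        exact hν_le j _ (Ccal_subset_FmA p.2.2)
      _ = ((t.card : NNReal) : ENNReal) := by simp
  set U : Ultrafilter ℕ := Filter.hyperfilter ℕ
  have hU : (U : Filter ℕ) ≤ Filter.atTop := Nat.hyperfilter_le_atTop
  obtain ⟨η, hηreg, hη⟩ := exists_vague_limit U ν hbd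
  have hval : ∀ w ∈ FmA A L, ℓ w = η (relCyl A w) := by
    intro w hw
    have ho : IsOpen (relCyl A w) := isOpen_relCyl w
    have hc := isCompact_relCyl hfg hw
    have h1 := hη (indic ho hc)
    simp only [integral_indic] at h1
    have hl : ℓ w ≤ 1 := le_of_tendsto' (hℓ w) fun j => hν_le j w hw
    have hltop : ℓ w ≠ ⊤ := (hl.trans_lt ENNReal.one_lt_top).ne
    have h2 := ((ENNReal.tendsto_toReal hltop).comp (hℓ w)).mono_left hU
    exact (ENNReal.toReal_eq_toReal_iff' hltop hc.measure_ne_top).1 (tendsto_nhds_unique h2 h1)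
  have hconv : ∀ w ∈ FmA A L, Filter.Tendsto (fun j => ν j (relCyl A w)) Filter.atTop
      (nhds (η (relCyl A w))) := fun w hw => hval w hw ▸ hℓ w
  refine ⟨ms, fun j => lam0 (ms j), η, hms, fun j => hlam0_pos _, ⟨fun g s hs => ?_, hηreg⟩, ?_,
    hconv⟩
  · have hmap : η.map (relHomeo hfg g) = η := by
      refine map_eq_of_vague hη (relHomeo hfg g) fun j => ?_
      ext s hs
      rw [Measure.map_apply (relHomeo hfg g).continuous.measurable hs]
      exact hν_inv j g s hs
    conv_rhs => rw [← hmap]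
    rw [Measure.map_apply (relHomeo hfg g).continuous.measurable hs]
    rfl
  · by_contra h0
    push Not at h0
    have hsum : Filter.Tendsto (fun j => ∑ x ∈ 𝒞, ν j (relCyl A x)) Filter.atTop
        (nhds (∑ x ∈ 𝒞, η (relCyl A x))) :=
      tendsto_finsetSum _ fun x hx => hconv x (Ccal_subset_FmA (mem𝒞.1 hx))
    have hone : ∀ j, ∑ x ∈ 𝒞, ν j (relCyl A x) = 1 := by
      intro j
      simp only [hν_apply]
      rw [← Finset.mul_sum, hlam0_coe]
      exact ENNReal.inv_mul_cancel (hS0 _) (hStop _)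
    simp only [hone] at hsum
    have h1 := tendsto_nhds_unique hsum tendsto_const_nhds
    rw [Finset.sum_eq_zero fun x hx => h0 x (Ccal_subset_FmA (mem𝒞.1 hx))] at h1
    exact zero_ne_one h1

end RelCurr
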